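/- Let Q ∈ ℂ^{2d×2d} be symmetric and F = J Q. Then for every integer m ≥ 1, { X ∈ ℝ^{2d} : Im((iF)^k)·X = 0 for all 1 ≤ k ≤ m } = { X ∈ ℝ^{2d} : Re F · (Im F)^k · X = 0 for all 0 ≤ k ≤ m−1 }, where Im((iF)^k) denotes the entrywise imaginary part of the matrix (iF)^k. -/

import Mathlib

open Matrix Complex

namespace Stmt7

/-- The standard symplectic matrix `J = [[0, I],[−I, 0]]` on `ℂ^{2d} = ℂ^d ⊕ ℂ^d`. -/
noncomputable def J (d : ℕ) : Matrix (Fin d ⊕ Fin d) (Fin d ⊕ Fin d) ℂ :=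
  Matrix.fromBlocks 0 1 (-1) 0

lemma aux_step {n : Type*} [Fintype n] [DecidableEq n] (F : Matrix n n ℂ) (k : ℕ) :
    ((Complex.I • F) ^ (k+1)).map Complex.re
      = (-(F.map Complex.im)) * ((Complex.I • F) ^ k).map Complex.re
        - F.map Complex.re * ((Complex.I • F) ^ k).map Complex.im ∧
    ((Complex.I • F) ^ (k+1)).map Complex.im
      = F.map Complex.re * ((Complex.I • F) ^ k).map Complex.re
        + (-(F.map Complex.im)) * ((Complex.I • F) ^ k).map Complex.im := by
  rw [pow_succ']
  generalize (Complex.I • F) ^ k = G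
  constructor
  · ext i j
    simp [Matrix.mul_apply, Finset.mul_sum, Matrix.sub_apply, Finset.sum_add_distrib, sub_eq_add_neg]
  · ext i j
    simp [Matrix.mul_apply, Finset.mul_sum, Matrix.add_apply, Finset.sum_add_distrib, sub_eq_add_neg, add_comm]

lemma aux_neg {n : Type*} [Fintype n] [DecidableEq n] (A C : Matrix n n ℝ) (k : ℕ) (X : n → ℝ) :
    (A * C ^ k).mulVec X = 0 ↔ A.mulVec (((-C) ^ k).mulVec X) = 0 := by
  rw [Matrix.mulVec_mulVec]
  rcases Nat.even_or_odd k with h | h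
  · rw [h.neg_pow]
  · rw [h.neg_pow, Matrix.mul_neg, Matrix.neg_mulVec, neg_eq_zero]

lemma aux_main {n : Type*} [Fintype n] [DecidableEq n] (F : Matrix n n ℂ) (X : n → ℝ) (m : ℕ) :
    (∀ k : ℕ, 1 ≤ k → k ≤ m → (((Complex.I • F) ^ k).map Complex.im).mulVec X = 0) ↔
    (∀ k : ℕ, k + 1 ≤ m → (F.map Complex.re * (F.map Complex.im) ^ k).mulVec X = 0) := by
  have hP : ∀ k, (((Complex.I • F) ^ (k+1)).map Complex.re).mulVec X
      = (-(F.map Complex.im)).mulVec ((((Complex.I • F) ^ k).map Complex.re).mulVec X)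
        - (F.map Complex.re).mulVec ((((Complex.I • F) ^ k).map Complex.im).mulVec X) := by
    intro k
    rw [(aux_step F k).1, Matrix.sub_mulVec, Matrix.mulVec_mulVec, Matrix.mulVec_mulVec]
  have hR : ∀ k, (((Complex.I • F) ^ (k+1)).map Complex.im).mulVec X
      = (F.map Complex.re).mulVec ((((Complex.I • F) ^ k).map Complex.re).mulVec X)
        + (-(F.map Complex.im)).mulVec ((((Complex.I • F) ^ k).map Complex.im).mulVec X) := by
    intro k
    rw [(aux_step F k).2, Matrix.add_mulVec, Matrix.mulVec_mulVec, Matrix.mulVec_mulVec]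
  have hP0 : (((Complex.I • F) ^ 0).map Complex.re).mulVec X = X := by
    rw [pow_zero, Matrix.map_one _ (by simp) (by simp), Matrix.one_mulVec]
  have hR0 : (((Complex.I • F) ^ 0).map Complex.im).mulVec X = 0 := by
    have : ((1 : Matrix n n ℂ).map Complex.im) = 0 := by
      ext i j
      by_cases h : i = j <;> simp [Matrix.one_apply, h]
    rw [pow_zero, this, Matrix.zero_mulVec]
  simp only [aux_neg]
  generalize F.map Complex.re = A at *
  generalize -(F.map Complex.im) = B at *
  generalize hp : (fun k => (((Complex.I • F) ^ k).map Complex.re).mulVec X) = p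
  generalize hr : (fun k => (((Complex.I • F) ^ k).map Complex.im).mulVec X) = r
  have hp' := fun k => congrFun hp k
  have hr' := fun k => congrFun hr k
  simp only [hp', hr'] at hP hR hP0 hR0 ⊢
  constructor
  · intro h
    have h' : ∀ k, k ≤ m → r k = 0 := by
      intro k hk
      rcases Nat.eq_zero_or_pos k with rfl | h0
      · exact hR0
      · exact h k h0 hk
    have key : ∀ k, k ≤ m → p k = (B ^ k).mulVec X := by
      intro k
      induction k with
      | zero => intro _; simp [hP0]
      | succ k ih =>
        intro hk
        rw [hP, h' k (by omega), ih (by omega), Matrix.mulVec_zero, sub_zero,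
          Matrix.mulVec_mulVec, pow_succ']
    intro k hk
    have h1 := hR k
    rw [h' _ hk, h' k (by omega), key k (by omega), Matrix.mulVec_zero, add_zero] at h1
    exact h1.symm
  · intro h
    have key : ∀ k, k ≤ m → p k = (B ^ k).mulVec X ∧ r k = 0 := by
      intro k
      induction k with
      | zero => intro _; simp [hP0, hR0]
      | succ k ih =>
        intro hk
        obtain ⟨h1, h2⟩ := ih (by omega)
        refine ⟨?_, ?_⟩
        · rw [hP, h2, h1, Matrix.mulVec_zero, sub_zero, Matrix.mulVec_mulVec, pow_succ']
        · rw [hR, h2, h1, Matrix.mulVec_zero, add_zero, h k hk]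
    exact fun k _ hk => (key k hk).2

/-- Let `Q ∈ ℂ^{2d×2d}` be symmetric and `F = J Q`.  Then for every
integer `m ≥ 1`,
`{ X ∈ ℝ^{2d} : Im((iF)^k) X = 0 for 1 ≤ k ≤ m }
  = { X ∈ ℝ^{2d} : Re F (Im F)^k X = 0 for 0 ≤ k ≤ m−1 }`. -/
theorem stmt_7 (d : ℕ) (Q : Matrix (Fin d ⊕ Fin d) (Fin d ⊕ Fin d) ℂ) (hQ : Q.IsSymm) :
    ∀ m : ℕ, 1 ≤ m →
      {X : Fin d ⊕ Fin d → ℝ | ∀ k : ℕ, 1 ≤ k → k ≤ m →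
          (((Complex.I • (J d * Q)) ^ k).map Complex.im).mulVec X = 0}
        = {X : Fin d ⊕ Fin d → ℝ | ∀ k : ℕ, k ≤ m - 1 →
          (((J d * Q).map Complex.re) * ((J d * Q).map Complex.im) ^ k).mulVec X = 0} := by
  intro m hm
  ext X
  simp only [Set.mem_setOf_eq]
  rw [aux_main]
  exact ⟨fun h k hk => h k (by omega), fun h k hk => h k (by omega)⟩

end Stmt7
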